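/- For any k ≥ 2, there is a constant C_k such that for any n ≥ C_k, there exists a k-uniform n-vertex hypergraph H with maximum degree at most C_k·n whose 4-color Ramsey number is at least tw_k(n/C_k). -/

import Mathlib

noncomputable section

/-- The tower function over the reals: `tw 1 x = x` and `tw k x = 2 ^ (tw (k-1) x)`
for `k ≥ 2`. -/
def twR : ℕ → ℝ → ℝ
  | 0, x => x
  | 1, x => x
  | (k + 2), x => (2 : ℝ) ^ twR (k + 1) x

/-- `arrowsProp n N q E` says that every `q`-coloring of the subsets of an `N`-element
set yields a monochromatic copy of the hypergraph on `[n]` with edge set `E`. -/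
def arrowsProp (n N q : ℕ) (E : Finset (Finset (Fin n))) : Prop :=
  ∀ χ : Finset (Fin N) → Fin q, ∃ f : Fin n ↪ Fin N, ∃ i : Fin q,
    ∀ e ∈ E, χ (e.map f) = i

/-- The `q`-color Ramsey number of the hypergraph on `[n]` with edge set `E`: the least `N`
such that every `q`-coloring of the subsets of an `N`-element set contains a monochromatic
copy. -/
def ramseyNumber (n q : ℕ) (E : Finset (Finset (Fin n))) : ℕ :=
  sInf {N | arrowsProp n N q E}

/-!
Partition the `n` vertices into intervals of constant length `s` and let the edges be all `k`-sets
meeting at most two of the intervals; all degrees are at most `4 ^ s * n`. A monochromatic copy of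
this hypergraph contains `m ≈ n / s` disjoint blocks of size `s` such that the unions of any two of
them are monochromatic of one common colour. So the task is to colour the `k`-subsets of a set of
tower size while avoiding such families of blocks.

For `k = 2` a random colouring in two colours works. To pass from `k` to `k + 1`, the Erdős–Hajnal
stepping-up method replaces `{0, …, N - 1}` by `{0, …, 2 ^ N - 1}`, where two numbers split at the
highest binary digit in which they differ, and colours a set along which the splitting heights are
monotone by the colour of its set of heights. Given a bad family of blocks for the new colouring,
Ramsey's theorem provides large subsets of the blocks with monotone heights, in half of the blocks
with the same direction. The colours of the non-monotone sets rule out one kind of local extremum in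
the unions, and therefore, after the ends of the blocks are cut off, the heights are monotone along
the union of any two blocks. The sets of heights then form a bad family for the old colouring. In
each step `s` grows to a constant that does not depend on `N`, and `m` is only doubled.

The passage from pairs to triples is simpler but doubles the number of colours: as every triple has
monotone heights, the direction is recorded as a second colour.
-/

open Finset Function

universe u v

section Ramsey

variable {α : Type u} {κ : Type v} {χ : Finset α → κ} {k : ℕ} {X Y : Finset α} {c : κ}

/-- Under the colouring `χ`, every `k`-element subset of `X` has colour `c`. -/
def IsMonochromatic (χ : Finset α → κ) (k : ℕ) (X : Finset α) (c : κ) : Prop :=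
  ∀ e ⊆ X, #e = k → χ e = c

theorem IsMonochromatic.mono (h : IsMonochromatic χ k X c) (hYX : Y ⊆ X) :
    IsMonochromatic χ k Y c :=
  fun e he => h e (he.trans hYX)

/-- `N` is an upper bound for the Ramsey number of `n`-point sets under colourings of `k`-sets by
`κ`: every coloured set of at least `N` points has a monochromatic subset of at least `n` points. -/
def IsRamseyBound (κ : Type v) (k n N : ℕ) : Prop :=
  ∀ ⦃α : Type u⦄ (χ : Finset α → κ) (X : Finset α), N ≤ #X →
    ∃ Y ⊆ X, n ≤ #Y ∧ ∃ c, IsMonochromatic χ k Y c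

theorem exists_subset_forall_isMonochromatic_insert
    (h : ∀ n, ∃ N, IsRamseyBound.{u} κ k n N) (n : ℕ) :
    ∃ N, ∀ ⦃α : Type u⦄ [LinearOrder α] (χ : Finset α → κ) (X : Finset α), N ≤ #X →
      ∃ Y ⊆ X, n ≤ #Y ∧ ∃ g : α → κ, ∀ x ∈ Y,
        IsMonochromatic (fun e => χ (insert x e)) k {y ∈ Y | x < y} (g x) := by
  induction n with
  | zero => exact ⟨0, fun α _ χ X _ => ⟨∅, empty_subset X, le_rfl, fun _ => χ ∅, by simp⟩⟩
  | succ n ihn =>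
    obtain ⟨N₁, hN₁⟩ := ihn
    obtain ⟨N₂, hN₂⟩ := h N₁
    refine ⟨N₂ + 1, fun α _ χ X hX => ?_⟩
    have hne : X.Nonempty := card_pos.mp (by omega)
    set x := X.min' hne
    obtain ⟨Z, hZX, hZ, c, hc⟩ := hN₂ (fun e => χ (insert x e)) (X.erase x)
      (by rw [card_erase_of_mem (X.min'_mem hne)]; omega)
    obtain ⟨Y, hYZ, hY, g, hg⟩ := hN₁ χ Z hZ
    have hxY : ∀ y ∈ Y, x < y := fun y hy => X.min'_lt_of_mem_erase_min' hne (hZX (hYZ hy))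
    have hx : x ∉ Y := fun hx => (hxY x hx).false
    refine ⟨insert x Y, insert_subset (X.min'_mem hne)
      (hYZ.trans (hZX.trans (erase_subset x X))), ?_, update g x c, ?_⟩
    · rw [card_insert_of_notMem hx]
      omega
    · intro y hy
      rcases mem_insert.mp hy with rfl | hy
      · rw [update_self, filter_insert, if_neg (lt_irrefl _)]
        exact hc.mono ((filter_subset _ Y).trans hYZ)
      · rw [update_of_ne (hxY y hy).ne', filter_insert, if_neg (hxY y hy).not_gt]
        exact hg y hy

theorem exists_isRamseyBound (κ : Type v) [Finite κ] (k n : ℕ) :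
    ∃ N, IsRamseyBound.{u} κ k n N := by
  cases nonempty_fintype κ
  induction k generalizing n with
  | zero =>
    refine ⟨n, fun α χ X hX => ⟨X, subset_rfl, hX, χ ∅, fun e _ he => ?_⟩⟩
    rw [card_eq_zero.mp he]
  | succ k ih =>
    obtain ⟨N, hN⟩ := exists_subset_forall_isMonochromatic_insert ih (Fintype.card κ * n)
    refine ⟨N, fun α χ X hX => ?_⟩
    obtain ⟨_, -⟩ := exists_wellFoundedLT α
    classical
    obtain ⟨Y, hYX, hY, g, hg⟩ := hN χ X hX
    obtain ⟨c, -, hc⟩ := exists_le_card_fiber_of_mul_le_card_of_maps_to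
      (t := univ) (fun y _ => mem_univ (g y)) ⟨χ ∅, mem_univ _⟩ hY
    refine ⟨{y ∈ Y | g y = c}, (filter_subset _ Y).trans hYX, hc, c, fun e he hek => ?_⟩
    have hne : e.Nonempty := card_pos.mp (by omega)
    have hmin : e.min' hne ∈ e := e.min'_mem hne
    obtain ⟨hminY, hgmin⟩ := mem_filter.mp (he hmin)
    rw [← insert_erase hmin, ← hgmin]
    refine hg _ hminY _ (fun y hy => mem_filter.mpr ?_) (by rw [card_erase_of_mem hmin, hek]; rfl)
    exact ⟨(mem_filter.mp (he (mem_of_mem_erase hy))).1, e.min'_lt_of_mem_erase_min' hne hy⟩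

end Ramsey

section Orientation

variable {α : Type*} [LinearOrder α] {P : α → α → α → Prop} {p q : Prop} {r : ℕ} {X Y : Finset α}

/-- `X` is oriented by the ternary predicate `P` with truth value `p`: for all `a < b < c` in `X`,
the statement `P a b c` has truth value `p`. -/
def IsOriented (P : α → α → α → Prop) (p : Prop) (X : Finset α) : Prop :=
  ∀ ⦃a⦄, a ∈ X → ∀ ⦃b⦄, b ∈ X → ∀ ⦃c⦄, c ∈ X → a < b → b < c → (P a b c ↔ p)

/-- Along some `a < b < c < d` in `X`, the truth value of `P` changes from `p` to `¬ p`. For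
`P a b c := δ a b < δ b c` this is a local maximum (`p` true) or minimum (`p` false) of `δ`. -/
def HasTurn (P : α → α → α → Prop) (p : Prop) (X : Finset α) : Prop :=
  ∃ a ∈ X, ∃ b ∈ X, ∃ c ∈ X, ∃ d ∈ X, a < b ∧ b < c ∧ c < d ∧ (P a b c ↔ p) ∧ ¬(P b c d ↔ p)

/-- `P` holds of the three smallest elements of `X`. -/
def HoldsAtStart (P : α → α → α → Prop) (X : Finset α) : Prop :=
  ∃ a ∈ X, ∃ b ∈ X, ∃ c ∈ X, a < b ∧ b < c ∧ (∀ x ∈ X, x = a ∨ x = b ∨ c ≤ x) ∧ P a b c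

/-- The elements of `X` with at least `r` elements of `X` below and at least `r` above them. -/
def trimEnds (r : ℕ) (X : Finset α) : Finset α :=
  {x ∈ X | r ≤ #{y ∈ X | y < x} ∧ r ≤ #{y ∈ X | x < y}}

theorem IsOriented.mono (h : IsOriented P p X) (hYX : Y ⊆ X) : IsOriented P p Y :=
  fun _ ha _ hb _ hc => h (hYX ha) (hYX hb) (hYX hc)

theorem HasTurn.mono (h : HasTurn P p X) (hXY : X ⊆ Y) : HasTurn P p Y := by
  obtain ⟨a, ha, b, hb, c, hc, d, hd, hturn⟩ := h
  exact ⟨a, hXY ha, b, hXY hb, c, hXY hc, d, hXY hd, hturn⟩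

theorem HasTurn.not_isOriented (h : HasTurn P q X) : ¬IsOriented P p X := by
  obtain ⟨a, ha, b, hb, c, hc, d, hd, hab, hbc, hcd, habc, hbcd⟩ := h
  intro hX
  exact hbcd ((hX hb hc hd hbc hcd).trans ((hX ha hb hc hab hbc).symm.trans habc))

theorem holdsAtStart_iff {a b c : α} (ha : a ∈ X) (hb : b ∈ X) (hc : c ∈ X) (hab : a < b)
    (hbc : b < c) (hX : ∀ x ∈ X, x = a ∨ x = b ∨ c ≤ x) : HoldsAtStart P X ↔ P a b c := by
  refine ⟨?_, fun h => ⟨a, ha, b, hb, c, hc, hab, hbc, hX, h⟩⟩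
  rintro ⟨a', ha', b', hb', c', hc', hab', hbc', hX', h⟩
  obtain rfl : a' = a := by grind
  obtain rfl : b' = b := by grind
  obtain rfl : c' = c := by grind
  exact h

theorem isOriented_of_isMonochromatic (h : IsMonochromatic (IsOriented P True) 3 X p) :
    IsOriented P p X := by
  intro a ha b hb c hc hab hbc
  have hcard : #{a, b, c} = 3 :=
    card_eq_three.mpr ⟨a, b, c, hab.ne, (hab.trans hbc).ne, hbc.ne, rfl⟩
  rw [← h {a, b, c} (by simp [insert_subset_iff, *]) hcard]
  refine ⟨fun habc x hx y hy z hz hxy hyz => iff_true_intro ?_, fun htriple =>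
    of_iff_true (htriple (by simp) (by simp) (by simp) hab hbc)⟩
  simp only [mem_insert, mem_singleton] at hx hy hz
  obtain rfl : x = a := by grind
  obtain rfl : y = b := by grind
  obtain rfl : z = c := by grind
  exact habc

theorem card_filter_lt_le_of_injOn {ι : Type*} {s : Finset ι} {f : ι → ℕ} (hf : Set.InjOn f s)
    (r : ℕ) : #{x ∈ s | f x < r} ≤ r := by
  simpa using card_le_card_of_injOn (t := range r) f (fun x hx => by simp_all)
    (hf.mono (coe_subset.mpr (filter_subset _ s)))

theorem trimEnds_subset (r : ℕ) (X : Finset α) : trimEnds r X ⊆ X :=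
  filter_subset _ X

theorem card_le_card_trimEnds_add (r : ℕ) (X : Finset α) : #X ≤ #(trimEnds r X) + 2 * r := by
  have hbelow : StrictMonoOn (fun x => #{y ∈ X | y < x}) X := fun x hx x' _ hxx' =>
    card_lt_card (ssubset_iff_of_subset (fun y => by grind) |>.mpr ⟨x, by grind⟩)
  have habove : StrictAntiOn (fun x => #{y ∈ X | x < y}) X := fun x _ x' hx' hxx' =>
    card_lt_card (ssubset_iff_of_subset (fun y => by grind) |>.mpr ⟨x', by grind⟩)
  have hcover : X ⊆ trimEnds r X ∪ ({x ∈ X | #{y ∈ X | y < x} < r} ∪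
      {x ∈ X | #{y ∈ X | x < y} < r}) := by
    intro x hx
    simp only [trimEnds, mem_union, mem_filter, hx, true_and]
    omega
  have h₁ := card_filter_lt_le_of_injOn hbelow.injOn r
  have h₂ := card_filter_lt_le_of_injOn habove.injOn r
  calc #X ≤ #(trimEnds r X) + (#{x ∈ X | #{y ∈ X | y < x} < r} +
        #{x ∈ X | #{y ∈ X | x < y} < r}) :=
        (card_le_card hcover).trans ((card_union_le _ _).trans (by grw [card_union_le]))
    _ ≤ #(trimEnds r X) + 2 * r := by omega

theorem trimEnds_mono (r : ℕ) (hXY : X ⊆ Y) : trimEnds r X ⊆ trimEnds r Y := by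
  intro x hx
  obtain ⟨hxX, hbelow, habove⟩ := mem_filter.mp hx
  exact mem_filter.mpr ⟨hXY hxX, hbelow.trans (card_le_card (filter_subset_filter _ hXY)),
    habove.trans (card_le_card (filter_subset_filter _ hXY))⟩

theorem exists_lt_of_one_lt_card {s : Finset α} (hs : 1 < #s) : ∃ a ∈ s, ∃ b ∈ s, a < b := by
  obtain ⟨a, ha, b, hb, hab⟩ := one_lt_card.mp hs
  rcases hab.lt_or_gt with h | h
  exacts [⟨a, ha, b, hb, h⟩, ⟨b, hb, a, ha, h⟩]

theorem IsOriented.exists_around_of_mem_trimEnds (hX : IsOriented P p X) {x : α}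
    (hx : x ∈ trimEnds 2 X) :
    (∃ a ∈ X, ∃ b ∈ X, a < b ∧ b < x ∧ (P a b x ↔ p)) ∧
      ∃ c ∈ X, ∃ d ∈ X, x < c ∧ c < d ∧ (P x c d ↔ p) := by
  obtain ⟨hxX, hbelow, habove⟩ := mem_filter.mp hx
  obtain ⟨a, ha, b, hb, hab⟩ := exists_lt_of_one_lt_card hbelow
  obtain ⟨c, hc, d, hd, hcd⟩ := exists_lt_of_one_lt_card habove
  rw [mem_filter] at ha hb hc hd
  exact ⟨⟨a, ha.1, b, hb.1, hab, hb.2, hX ha.1 hb.1 hxX hab hb.2⟩,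
    c, hc.1, d, hd.1, hc.2, hcd, hX hxX hc.1 hd.1 hc.2 hcd⟩

/-- A wrongly oriented triple, continued to the left and to the right by correctly oriented ones,
would produce turns of both kinds. -/
theorem IsOriented.union_trimEnds (hX : IsOriented P p X) (hY : IsOriented P p Y)
    (hturn : ¬HasTurn P q (X ∪ Y)) : IsOriented P p (trimEnds 2 X ∪ trimEnds 2 Y) := by
  have haround : ∀ x ∈ trimEnds 2 X ∪ trimEnds 2 Y,
      (∃ a ∈ X ∪ Y, ∃ b ∈ X ∪ Y, a < b ∧ b < x ∧ (P a b x ↔ p)) ∧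
        ∃ c ∈ X ∪ Y, ∃ d ∈ X ∪ Y, x < c ∧ c < d ∧ (P x c d ↔ p) := by
    intro x hx
    rcases mem_union.mp hx with hx | hx
    · have := hX.exists_around_of_mem_trimEnds hx
      grind
    · have := hY.exists_around_of_mem_trimEnds hx
      grind
  have hsub : trimEnds 2 X ∪ trimEnds 2 Y ⊆ X ∪ Y :=
    union_subset_union (trimEnds_subset 2 X) (trimEnds_subset 2 Y)
  intro x hx y hy z hz hxy hyz
  by_contra hxyz
  refine hturn ?_
  by_cases hpq : p ↔ q
  · obtain ⟨⟨a, ha, b, hb, hab, hbx, habx⟩, -⟩ := haround x hx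
    by_cases hbxy : P b x y ↔ p
    · exact ⟨b, hb, x, hsub hx, y, hsub hy, z, hsub hz, hbx, hxy, hyz, by tauto, by tauto⟩
    · exact ⟨a, ha, b, hb, x, hsub hx, y, hsub hy, hab, hbx, hxy, by tauto, by tauto⟩
  · obtain ⟨-, c, hc, d, hd, hzc, hcd, hzcd⟩ := haround z hz
    by_cases hyzc : P y z c ↔ p
    · exact ⟨x, hsub hx, y, hsub hy, z, hsub hz, c, hc, hxy, hyz, hzc, by tauto, by tauto⟩
    · exact ⟨y, hsub hy, z, hsub hz, c, hc, d, hd, hyz, hzc, hcd, by tauto, by tauto⟩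

theorem HasTurn.exists_subset_of_trimEnds (h : HasTurn P q (trimEnds r X)) :
    ∃ e ⊆ X, #e = r + 4 ∧ HasTurn P q e ∧ (HoldsAtStart P e ↔ q) := by
  obtain ⟨a, ha, b, hb, c, hc, d, hd, hab, hbc, hcd, habc, hbcd⟩ := h
  obtain ⟨Z, hZ, hZcard⟩ := exists_subset_card_eq (mem_filter.mp hd).2.2
  have hZd : ∀ x ∈ Z, d < x := fun x hx => (mem_filter.mp (hZ hx)).2
  have hsub := trimEnds_subset r X
  refine ⟨{a, b, c, d} ∪ Z, ?_, ?_, ?_, ?_⟩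
  · exact union_subset (by simp [insert_subset_iff, hsub ha, hsub hb, hsub hc, hsub hd])
      (hZ.trans (filter_subset _ X))
  · have hdisj : Disjoint {a, b, c, d} Z := disjoint_left.mpr fun x hx hxZ => by
      have := hZd x hxZ
      grind
    have hquad : #{a, b, c, d} = 4 := by grind
    rw [card_union_of_disjoint hdisj, hquad, hZcard, add_comm]
  · exact ⟨a, by simp, b, by simp, c, by simp, d, by simp, hab, hbc, hcd, habc, hbcd⟩
  · rw [holdsAtStart_iff (a := a) (b := b) (c := c) (by simp) (by simp) (by simp) hab hbc, habc]
    grind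

end Orientation

section Heights

variable {α β : Type*} [LinearOrder β] {δ : α → α → β} {p : Prop}
  {X Y : Finset α} {e : Finset β} {a b m : α}

/-- The set of heights of pairs of distinct elements of `X`. -/
def heights (δ : α → α → β) (X : Finset α) : Finset β :=
  X.offDiag.image fun x => δ x.1 x.2

theorem mem_heights {h : β} : h ∈ heights δ X ↔ ∃ a ∈ X, ∃ b ∈ X, a ≠ b ∧ δ a b = h := by
  simp [heights, and_assoc]

theorem heights_mono (hXY : X ⊆ Y) : heights δ X ⊆ heights δ Y :=
  image_subset_image (offDiag_mono hXY)

variable [LinearOrder α]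

/-- `δ a b` behaves like the height at which the leaves `a` and `b` of an ordered binary tree
split. -/
structure IsSplitHeight (δ : α → α → β) : Prop where
  symm (a b : α) : δ a b = δ b a
  ne {a b c : α} : a < b → b < c → δ a b ≠ δ b c
  eq_max {a b c : α} : a < b → b < c → δ a c = max (δ a b) (δ b c)

/-- The height `δ` increases along the triple `a`, `b`, `c`. -/
def Ascends (δ : α → α → β) (a b c : α) : Prop :=
  δ a b < δ b c

/-- The tree spanned by the leaves `X` is a caterpillar: the paths from all other leaves join the
path from some leaf `m` at different heights. -/
def IsComb (δ : α → α → β) (X : Finset α) : Prop :=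
  ∃ m ∈ X, Set.InjOn (δ · m) (X.erase m)

namespace IsSplitHeight

theorem eq_max_of_ne (hδ : IsSplitHeight δ) (hab : a ≠ b) (ham : a ≠ m) (hbm : b ≠ m)
    (hne : δ a m ≠ δ b m) : δ a b = max (δ a m) (δ b m) := by
  wlog hlt : a < b generalizing a b
  · rw [hδ.symm a b, max_comm]
    exact this hab.symm hbm ham hne.symm (hab.lt_or_gt.resolve_left hlt)
  rcases ham.lt_or_gt with ham | hma
  · rcases hbm.lt_or_gt with hbm | hmb
    · have := hδ.eq_max hlt hbm
      grind
    · rw [hδ.eq_max ham hmb, hδ.symm m b]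
  · have := hδ.eq_max hma hlt
    grind [hδ.symm a m, hδ.symm b m]

theorem heights_subset_image (hδ : IsSplitHeight δ) (hX : Set.InjOn (δ · m) (X.erase m)) :
    heights δ X ⊆ (X.erase m).image (δ · m) := by
  intro h hh
  obtain ⟨a, ha, b, hb, hab, rfl⟩ := mem_heights.mp hh
  by_cases ham : a = m
  · subst ham
    exact mem_image.mpr ⟨b, mem_erase.mpr ⟨hab.symm, hb⟩, hδ.symm b a⟩
  by_cases hbm : b = m
  · subst hbm
    exact mem_image_of_mem _ (mem_erase.mpr ⟨hab, ha⟩)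
  have haX : a ∈ X.erase m := mem_erase.mpr ⟨ham, ha⟩
  have hbX : b ∈ X.erase m := mem_erase.mpr ⟨hbm, hb⟩
  rw [hδ.eq_max_of_ne hab ham hbm (hX.ne haX hbX hab)]
  rcases max_choice (δ a m) (δ b m) with hmax | hmax <;> rw [hmax]
  exacts [mem_image_of_mem _ haX, mem_image_of_mem _ hbX]

theorem heights_eq_image (hδ : IsSplitHeight δ) (hm : m ∈ X)
    (hX : Set.InjOn (δ · m) (X.erase m)) : heights δ X = (X.erase m).image (δ · m) := by
  refine (hδ.heights_subset_image hX).antisymm (image_subset_iff.mpr fun a ha => ?_)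
  exact mem_heights.mpr ⟨a, mem_of_mem_erase ha, m, hm, ne_of_mem_erase ha, rfl⟩

theorem isComb_of_isOriented (hδ : IsSplitHeight δ) (hX : X.Nonempty)
    (h : IsOriented (Ascends δ) p X) : IsComb δ X := by
  by_cases hp : p
  · have hmono : StrictMonoOn (δ · (X.min' hX)) (X.erase (X.min' hX)) := by
      intro b hb c hc hbc
      have hlt := X.min'_lt_of_mem_erase_min' hX hb
      have hasc := (h (X.min'_mem hX) (mem_of_mem_erase hb) (mem_of_mem_erase hc) hlt hbc).mpr hp
      change δ b _ < δ c _
      rw [hδ.symm b, hδ.symm c, hδ.eq_max hlt hbc]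
      exact hasc.trans_le (le_max_right _ _)
    exact ⟨_, X.min'_mem hX, hmono.injOn⟩
  · have hanti : StrictAntiOn (δ · (X.max' hX)) (X.erase (X.max' hX)) := by
      intro b hb c hc hbc
      have hlt := X.lt_max'_of_mem_erase_max' hX hc
      have hdesc := mt
        (h (mem_of_mem_erase hb) (mem_of_mem_erase hc) (X.max'_mem hX) hbc hlt).mp hp
      change δ c _ < δ b _
      rw [hδ.eq_max hbc hlt]
      exact lt_max_of_lt_left ((not_lt.mp hdesc).lt_of_ne (hδ.ne hbc hlt).symm)
    exact ⟨_, X.max'_mem hX, hanti.injOn⟩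

end IsSplitHeight

namespace IsComb

theorem card_heights (hX : IsComb δ X) (hδ : IsSplitHeight δ) : #(heights δ X) + 1 = #X := by
  obtain ⟨m, hm, hinj⟩ := hX
  rw [hδ.heights_eq_image hm hinj, card_image_of_injOn hinj, card_erase_add_one hm]

theorem exists_heights_eq (hX : IsComb δ X) (hδ : IsSplitHeight δ) (he : e ⊆ heights δ X) :
    ∃ e' ⊆ X, #e' = #e + 1 ∧ heights δ e' = e := by
  obtain ⟨m, hm, hinj⟩ := hX
  rw [hδ.heights_eq_image hm hinj] at he
  obtain ⟨u, hu, rfl⟩ := subset_image_iff.mp he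
  have hmu : m ∉ u := fun hmem => notMem_erase m X (hu hmem)
  have huinj : Set.InjOn (δ · m) u := hinj.mono (coe_subset.mpr hu)
  refine ⟨insert m u, insert_subset hm (hu.trans (erase_subset m X)), ?_, ?_⟩
  · rw [card_insert_of_notMem hmu, card_image_of_injOn huinj]
  · rw [hδ.heights_eq_image (mem_insert_self m u) (by rwa [erase_insert hmu]), erase_insert hmu]

theorem disjoint_heights (hXY : IsComb δ (X ∪ Y)) (hδ : IsSplitHeight δ) (hdisj : Disjoint X Y) :
    Disjoint (heights δ X) (heights δ Y) := by
  obtain ⟨m, -, hinj⟩ := hXY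
  have hsubX := erase_subset_erase m (subset_union_left : X ⊆ X ∪ Y)
  have hsubY := erase_subset_erase m (subset_union_right : Y ⊆ X ∪ Y)
  refine disjoint_left.mpr fun h hhX hhY => ?_
  obtain ⟨a, ha, rfl⟩ := mem_image.mp
    (hδ.heights_subset_image (hinj.mono (coe_subset.mpr hsubX)) hhX)
  obtain ⟨b, hb, hba⟩ := mem_image.mp
    (hδ.heights_subset_image (hinj.mono (coe_subset.mpr hsubY)) hhY)
  obtain rfl : b = a := hinj (hsubY hb) (hsubX ha) hba
  exact disjoint_left.mp hdisj (mem_of_mem_erase ha) (mem_of_mem_erase hb)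

end IsComb

/-- The position of the highest binary digit in which `a` and `b` differ. -/
def splitLevel (a b : ℕ) : ℕ :=
  Nat.log 2 (a ^^^ b)

theorem splitLevel_le_iff {a b i : ℕ} :
    splitLevel a b ≤ i ↔ a / 2 ^ (i + 1) = b / 2 ^ (i + 1) := by
  rw [← Nat.xor_eq_zero_iff, ← Nat.xor_div_two_pow, Nat.div_eq_zero_iff_lt (by positivity),
    splitLevel, ← Nat.lt_succ_iff]
  rcases eq_or_ne (a ^^^ b) 0 with h | h
  · simp [h]
  · exact Nat.log_lt_iff_lt_pow one_lt_two h

theorem div_two_pow_splitLevel_lt {a b : ℕ} (hab : a < b) :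
    a / 2 ^ splitLevel a b < b / 2 ^ splitLevel a b := by
  refine (Nat.div_le_div_right hab.le).lt_of_ne ?_
  rcases h : splitLevel a b with _ | i
  · simpa using hab.ne
  · rw [Ne, ← splitLevel_le_iff, h]
    omega

theorem isSplitHeight_splitLevel : IsSplitHeight splitLevel where
  symm a b := by rw [splitLevel, Nat.xor_comm, splitLevel]
  ne {a b c} hab hbc heq := by
    have hab' := div_two_pow_splitLevel_lt hab
    have hbc' := div_two_pow_splitLevel_lt hbc
    have hac := (splitLevel_le_iff.mp le_rfl).trans (splitLevel_le_iff.mp heq.ge)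
    rw [← heq] at hbc'
    rw [pow_succ, ← Nat.div_div_eq_div_mul, ← Nat.div_div_eq_div_mul] at hac
    omega
  eq_max {a b c} hab hbc := eq_of_forall_ge_iff fun i => by
    have hab' : a / 2 ^ (i + 1) ≤ b / 2 ^ (i + 1) := Nat.div_le_div_right hab.le
    have hbc' : b / 2 ^ (i + 1) ≤ c / 2 ^ (i + 1) := Nat.div_le_div_right hbc.le
    rw [max_le_iff, splitLevel_le_iff, splitLevel_le_iff, splitLevel_le_iff]
    omega

theorem heights_splitLevel_subset_range {N : ℕ} {V : Finset ℕ} (hV : V ⊆ range (2 ^ N)) :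
    heights splitLevel V ⊆ range N := by
  intro i hi
  obtain ⟨a, ha, b, hb, hab, rfl⟩ := mem_heights.mp hi
  exact mem_range.mpr (Nat.log_lt_of_lt_pow (Nat.xor_ne_zero_iff.mpr hab)
    (Nat.xor_lt_two_pow (mem_range.mp (hV ha)) (mem_range.mp (hV hb))))

end Heights

section SteppingUp

variable {α : Type u} {β κ κ' : Type*} {k m n r s t R : ℕ}

/-- No `m` pairwise disjoint subsets of `V` with at least `s` elements each are such that the unions
of two of them (possibly equal) are all monochromatic of the same colour. -/
def AvoidsBlocks [DecidableEq α] (χ : Finset α → κ) (k s m : ℕ) (V : Finset α) : Prop :=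
  ∀ T : Fin m → Finset α, (∀ i, T i ⊆ V) → (∀ i, s ≤ #(T i)) → Pairwise (Disjoint on T) →
    ∀ c, ¬∀ i j, IsMonochromatic χ k (T i ∪ T j) c

namespace AvoidsBlocks

theorem mono [DecidableEq α] {χ : Finset α → κ} {V W : Finset α} (hχ : AvoidsBlocks χ k s m W)
    (hst : s ≤ t) (hVW : V ⊆ W) : AvoidsBlocks χ k t m V :=
  fun T hTV hcard => hχ T (fun i => (hTV i).trans hVW) (fun i => hst.trans (hcard i))

theorem comp_injective [DecidableEq α] {χ : Finset α → κ} {V : Finset α}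
    (hχ : AvoidsBlocks χ k s m V) {f : κ → κ'} (hf : Injective f) :
    AvoidsBlocks (f ∘ χ) k s m V := by
  intro T hTV hcard hdisj c' hmono
  by_cases hc' : ∃ c, f c = c'
  · obtain ⟨c, rfl⟩ := hc'
    exact hχ T hTV hcard hdisj c fun i j e he hek => hf (hmono i j e he hek)
  · exact hχ T hTV hcard hdisj (χ ∅) fun i j e he hek => (hc' ⟨χ e, hmono i j e he hek⟩).elim

variable [LinearOrder α] [LinearOrder β] {δ : α → α → β} {χ : Finset β → κ} {V : Finset α}
  {W : Finset β}

theorem not_isMonochromatic_heights (hχ : AvoidsBlocks χ k s m W) (hδ : IsSplitHeight δ)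
    (hVW : heights δ V ⊆ W) {T : Fin m → Finset α} (hTV : ∀ i, T i ⊆ V)
    (hcard : ∀ i, s + 1 ≤ #(T i)) (hdisj : Pairwise (Disjoint on T))
    (hcomb : ∀ i j, IsComb δ (T i ∪ T j)) (c : κ) :
    ¬∀ i j, IsMonochromatic (fun e => χ (heights δ e)) (k + 1) (T i ∪ T j) c := by
  intro hmono
  refine hχ (fun i => heights δ (T i)) (fun i => (heights_mono (hTV i)).trans hVW) (fun i => ?_)
    (fun i j hij => (hcomb i j).disjoint_heights hδ (hdisj hij)) c fun i j e he hek => ?_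
  · have hcombi : IsComb δ (T i) := by simpa using hcomb i i
    have := hcombi.card_heights hδ
    have := hcard i
    omega
  · have hunion : heights δ (T i) ∪ heights δ (T j) ⊆ heights δ (T i ∪ T j) :=
      union_subset (heights_mono subset_union_left) (heights_mono subset_union_right)
    obtain ⟨e', he', he'card, rfl⟩ := (hcomb i j).exists_heights_eq hδ (he.trans hunion)
    exact hmono i j e' he' (by rw [he'card, hek])

theorem stepUp_pairs (hχ : AvoidsBlocks χ 2 s m W) (hδ : IsSplitHeight δ)
    (hVW : heights δ V ⊆ W) :
    AvoidsBlocks (fun e => (χ (heights δ e), IsOriented (Ascends δ) True e)) 3 (s + 1) m V := by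
  rintro T hTV hcard hdisj ⟨c, p⟩ hmono
  have hcomb : ∀ i j, IsComb δ (T i ∪ T j) := by
    intro i j
    have hori : IsOriented (Ascends δ) p (T i ∪ T j) := isOriented_of_isMonochromatic
      fun e he hek => congrArg Prod.snd (hmono i j e he hek)
    have hne : (T i).Nonempty := card_pos.mp (by have := hcard i; omega)
    exact hδ.isComb_of_isOriented (hne.mono subset_union_left) hori
  exact hχ.not_isMonochromatic_heights hδ hVW hTV hcard hdisj hcomb c
    fun i j e he hek => congrArg Prod.fst (hmono i j e he hek)

end AvoidsBlocks

variable [LinearOrder α]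

/-- The stepping-up of a colouring `χ` of sets of heights: sets along which the heights are
monotone inherit the colour of their set of heights, and the colour of all other sets only
records, through `τ`, whether the heights initially increase. -/
def stepUpColoring (δ : α → α → β) [LinearOrder β] (τ : Prop → κ) (χ : Finset β → κ)
    (e : Finset α) : κ :=
  open Classical in
  if ∃ p, IsOriented (Ascends δ) p e then χ (heights δ e) else τ (HoldsAtStart (Ascends δ) e)

theorem exists_oriented_subfamily {P : α → α → α → Prop} (hR : IsRamseyBound.{u} Prop 3 n R)
    {T : Fin (2 * m) → Finset α} (hT : ∀ i, R ≤ #(T i)) :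
    ∃ (p : Prop) (g : Fin m ↪ Fin (2 * m)) (Y : Fin m → Finset α),
      ∀ i, Y i ⊆ T (g i) ∧ n ≤ #(Y i) ∧ IsOriented P p (Y i) := by
  have hY : ∀ i, ∃ Y ⊆ T i, n ≤ #Y ∧ ∃ p, IsOriented P p Y := by
    intro i
    obtain ⟨Y, hYT, hY, p, hp⟩ := hR (IsOriented P True) (T i) (hT i)
    exact ⟨Y, hYT, hY, p, isOriented_of_isMonochromatic hp⟩
  choose Y hYT hY p hp using hY
  classical
  obtain ⟨p₀, hp₀⟩ := Fintype.exists_le_card_fiber_of_mul_le_card p (n := m) (by simp)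
  obtain ⟨g⟩ : Nonempty (Fin m ↪ {i // p i = p₀}) :=
    Embedding.nonempty_of_card_le (by simpa [Fintype.card_subtype] using hp₀)
  have hori : ∀ i : {i // p i = p₀}, IsOriented P p₀ (Y i) := by
    rintro ⟨i, rfl⟩
    exact hp i
  exact ⟨p₀, g.trans (Embedding.subtype _), fun i => Y (g i),
    fun i => ⟨hYT _, hY _, hori (g i)⟩⟩

theorem not_hasTurn_trimEnds {δ : α → α → β} [LinearOrder β] {τ : Prop → κ} {χ : Finset β → κ}
    {q : Prop} {c : κ} {X : Finset α} (hq : τ q ≠ c)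
    (hmono : IsMonochromatic (stepUpColoring δ τ χ) (r + 4) X c) :
    ¬HasTurn (Ascends δ) q (trimEnds r X) := by
  intro hturn
  obtain ⟨e, heX, hecard, heturn, hstart⟩ := hturn.exists_subset_of_trimEnds
  have hc := hmono e heX hecard
  rw [stepUpColoring, if_neg fun ⟨p, hp⟩ => heturn.not_isOriented hp, hstart] at hc
  exact hq hc

theorem AvoidsBlocks.stepUp {δ : α → α → β} [LinearOrder β] {χ : Finset β → κ} {V : Finset α}
    {W : Finset β} (hχ : AvoidsBlocks χ (r + 3) s m W) (hδ : IsSplitHeight δ)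
    (hVW : heights δ V ⊆ W) {τ : Prop → κ} (hτ : Injective τ)
    (hR : IsRamseyBound.{u} Prop 3 (s + 1 + 2 * 2 + 2 * r) R) :
    AvoidsBlocks (stepUpColoring δ τ χ) (r + 4) R (2 * m) V := by
  intro T hTV hcard hdisj c hmono
  obtain ⟨p, g, Y, hY⟩ := exists_oriented_subfamily (P := Ascends δ) hR hcard
  obtain ⟨q, hq⟩ : ∃ q, τ q ≠ c := by
    by_contra! h
    exact true_ne_false (hτ ((h True).trans (h False).symm))
  set X := fun i => trimEnds r (Y i)
  set Z := fun i => trimEnds 2 (X i)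
  have hXT : ∀ i, X i ⊆ T (g i) := fun i => (trimEnds_subset r _).trans (hY i).1
  have hZT : ∀ i, Z i ⊆ T (g i) := fun i => (trimEnds_subset 2 _).trans (hXT i)
  have hZcard : ∀ i, s + 1 ≤ #(Z i) := by
    intro i
    have := (hY i).2.1
    have := card_le_card_trimEnds_add r (Y i)
    have := card_le_card_trimEnds_add 2 (X i)
    grind
  have hXori : ∀ i, IsOriented (Ascends δ) p (X i) :=
    fun i => (hY i).2.2.mono (trimEnds_subset r _)
  have hZori : ∀ i j, IsOriented (Ascends δ) p (Z i ∪ Z j) := by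
    intro i j
    refine (hXori i).union_trimEnds (q := q) (hXori j) fun hturn => ?_
    refine not_hasTurn_trimEnds hq (hmono (g i) (g j)) (hturn.mono (union_subset ?_ ?_))
    · exact trimEnds_mono r ((hY i).1.trans subset_union_left)
    · exact trimEnds_mono r ((hY j).1.trans subset_union_right)
  have hZne : ∀ i, (Z i).Nonempty := fun i => card_pos.mp (by have := hZcard i; omega)
  refine hχ.not_isMonochromatic_heights hδ hVW (fun i => (hZT i).trans (hTV _)) hZcard
    (fun i j hij => (hdisj (g.injective.ne hij)).mono (hZT i) (hZT j))
    (fun i j => hδ.isComb_of_isOriented ((hZne i).mono subset_union_left) (hZori i j)) c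
    fun i j e he hek => ?_
  have hc := hmono (g i) (g j) e (he.trans (union_subset_union (hZT i) (hZT j))) hek
  rwa [stepUpColoring, if_pos ⟨p, (hZori i j).mono he⟩] at hc

end SteppingUp

section RandomColoring

variable {α ι κ : Type*} {k m n : ℕ}

theorem avoidsBlocks_of_forall_not_isMonochromatic [DecidableEq α] {χ : Finset α → κ}
    {V : Finset α} (hχ : ∀ S ⊆ V, #S = m → ∀ c, ¬IsMonochromatic χ 2 S c) :
    AvoidsBlocks χ 2 1 m V := by
  intro T hTV hT hdisj c hmono
  choose x hx using fun i => card_pos.mp (hT i)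
  have hinj : Injective x := fun i j hij => by_contra fun hne =>
    disjoint_left.mp (hdisj hne) (hx i) (hij ▸ hx j)
  refine hχ (univ.image x) (image_subset_iff.mpr fun i _ => hTV i (hx i))
    (by rw [card_image_of_injective _ hinj, card_univ, Fintype.card_fin]) c fun e he he2 => ?_
  obtain ⟨y, z, -, rfl⟩ := card_eq_two.mp he2
  obtain ⟨i, -, rfl⟩ := mem_image.mp (he (mem_insert_self y {z}))
  obtain ⟨j, -, rfl⟩ := mem_image.mp (he (mem_insert_of_mem (mem_singleton_self z)))
  exact hmono i j _ (by grind) he2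

variable [Fintype κ]

theorem card_filter_forall_mem_eq [Fintype ι] [DecidableEq ι] [DecidableEq κ] (Q : Finset ι)
    (c : κ) : #{f : ι → κ | ∀ x ∈ Q, f x = c} = Fintype.card κ ^ (Fintype.card ι - #Q) := by
  have hpi : ({f : ι → κ | ∀ x ∈ Q, f x = c} : Finset (ι → κ)) =
      Fintype.piFinset fun x => if x ∈ Q then {c} else univ := by
    ext f
    simp only [mem_filter, mem_univ, true_and, Fintype.mem_piFinset]
    refine forall_congr' fun x => ?_
    split_ifs with hx <;> simp [hx]
  rw [hpi, Fintype.card_piFinset]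
  simp [apply_ite card, prod_ite, filter_not, card_sdiff_of_subset]

/-- Union bound: a random colouring is constant on a given set of the family with probability
`card κ ^ (1 - n)`. -/
theorem exists_forall_mem_forall_exists_ne [Finite ι] [Nonempty κ] {𝒬 : Finset (Finset ι)}
    (h𝒬 : (𝒬 : Set (Finset ι)).Sized n) (hlt : #𝒬 * Fintype.card κ < Fintype.card κ ^ n) :
    ∃ f : ι → κ, ∀ Q ∈ 𝒬, ∀ c, ∃ x ∈ Q, f x ≠ c := by
  classical
  cases nonempty_fintype ι
  obtain rfl | ⟨Q₀, hQ₀⟩ := 𝒬.eq_empty_or_nonempty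
  · exact ⟨fun _ => Classical.arbitrary κ, by simp⟩
  have hn : n ≤ Fintype.card ι := h𝒬 hQ₀ ▸ card_le_univ Q₀
  let bad : Finset (ι → κ) := (𝒬 ×ˢ univ).biUnion fun Qc => {f | ∀ x ∈ Qc.1, f x = Qc.2}
  have hbad : #bad < #(univ : Finset (ι → κ)) := calc
    #bad ≤ #(𝒬 ×ˢ (univ : Finset κ)) * Fintype.card κ ^ (Fintype.card ι - n) :=
      card_biUnion_le_card_mul _ _ _ fun Qc hQc => by
        rw [← h𝒬 (mem_product.mp hQc).1]
        exact (card_filter_forall_mem_eq Qc.1 Qc.2).le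
    _ < Fintype.card κ ^ n * Fintype.card κ ^ (Fintype.card ι - n) := by
      rw [card_product, card_univ]
      exact Nat.mul_lt_mul_of_pos_right hlt (pow_pos Fintype.card_pos _)
    _ = #(univ : Finset (ι → κ)) := by
      rw [← pow_add, Nat.add_sub_cancel' hn, card_univ, Fintype.card_fun]
  obtain ⟨f, -, hf⟩ := exists_mem_notMem_of_card_lt_card hbad
  refine ⟨f, fun Q hQ c => ?_⟩
  by_contra! hconst
  exact hf (mem_biUnion.mpr ⟨(Q, c), by simp [hQ], by simpa using hconst⟩)

theorem exists_forall_not_isMonochromatic [Nonempty κ] {V : Finset α}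
    (hlt : (#V).choose m * Fintype.card κ < Fintype.card κ ^ m.choose k) :
    ∃ χ : Finset α → κ, ∀ S ⊆ V, #S = m → ∀ c, ¬IsMonochromatic χ k S c := by
  classical
  let 𝒬 : Finset (Finset (Finset V)) := (univ.powersetCard m).image (powersetCard k)
  have h𝒬 : (𝒬 : Set (Finset (Finset V))).Sized (m.choose k) := by
    intro Q hQ
    obtain ⟨S, hS, rfl⟩ := mem_image.mp hQ
    rw [card_powersetCard, (mem_powersetCard.mp hS).2]
  have hcard : #𝒬 ≤ (#V).choose m := card_image_le.trans (by simp)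
  obtain ⟨f, hf⟩ := exists_forall_mem_forall_exists_ne (κ := κ) h𝒬 (by grw [hcard]; exact hlt)
  refine ⟨fun e => f (e.subtype (· ∈ V)), fun S hSV hS c hmono => ?_⟩
  have hS𝒬 : (S.subtype (· ∈ V)).powersetCard k ∈ 𝒬 := by
    refine mem_image_of_mem _ (mem_powersetCard.mpr ⟨subset_univ _, ?_⟩)
    rw [card_subtype, filter_true_of_mem hSV, hS]
  obtain ⟨e, he, hec⟩ := hf _ hS𝒬 c
  obtain ⟨heS, hek⟩ := mem_powersetCard.mp he
  refine hec ?_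
  rw [← hmono (e.map (Embedding.subtype _)) ?_ (by rw [card_map, hek])]
  · congr 1
    ext x
    simp
  · intro x hx
    obtain ⟨y, hy, rfl⟩ := mem_map.mp hx
    exact mem_subtype.mp (heS hy)

/-- Erdős' lower bound for the Ramsey numbers of complete graphs. -/
theorem exists_avoidsBlocks_pairs {t : ℕ} (ht : 0 < t) :
    ∃ χ : Finset ℕ → Bool, AvoidsBlocks χ 2 1 (4 * t) (range (2 ^ t)) := by
  suffices hlt : (#(range (2 ^ t))).choose (4 * t) * Fintype.card Bool <
      Fintype.card Bool ^ (4 * t).choose 2 by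
    obtain ⟨χ, hχ⟩ := exists_forall_not_isMonochromatic hlt
    exact ⟨χ, avoidsBlocks_of_forall_not_isMonochromatic hχ⟩
  rw [card_range, Fintype.card_bool]
  have hexp : t * (4 * t) + 1 < (4 * t).choose 2 := by
    obtain ⟨u, rfl⟩ := Nat.exists_eq_add_of_lt ht
    rw [Nat.choose_two_right, Nat.lt_iff_add_one_le, Nat.le_div_iff_mul_le two_pos,
      show 4 * (0 + u + 1) - 1 = 4 * u + 3 by omega]
    nlinarith
  calc (2 ^ t).choose (4 * t) * 2 ≤ (2 ^ t) ^ (4 * t) * 2 := by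
        gcongr
        exact Nat.choose_le_pow _ _
    _ = 2 ^ (t * (4 * t) + 1) := by rw [pow_succ, ← pow_mul]
    _ < 2 ^ (4 * t).choose 2 := Nat.pow_lt_pow_right one_lt_two hexp

end RandomColoring

theorem exists_avoidsBlocks (k : ℕ) : ∃ s M : ℕ, 0 < M ∧ ∀ t, 0 < t →
    ∃ χ : Finset ℕ → Bool × Prop,
      AvoidsBlocks χ (k + 2) (s + 1) (M * t) (range ((fun x => 2 ^ x)^[k + 1] t)) := by
  have hrange (N : ℕ) := heights_splitLevel_subset_range (N := N) subset_rfl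
  induction k using Nat.strong_induction_on with
  | _ k ih =>
  match k with
  | 0 =>
    refine ⟨0, 4, by norm_num, fun t ht => ?_⟩
    obtain ⟨χ, hχ⟩ := exists_avoidsBlocks_pairs ht
    exact ⟨_, hχ.comp_injective (Prod.mk_left_injective True)⟩
  | 1 =>
    refine ⟨1, 4, by norm_num, fun t ht => ?_⟩
    obtain ⟨χ, hχ⟩ := exists_avoidsBlocks_pairs ht
    exact ⟨_, hχ.stepUp_pairs isSplitHeight_splitLevel (hrange _)⟩
  | r + 2 =>
    obtain ⟨s, M, hM, hχ⟩ := ih (r + 1) (by omega)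
    obtain ⟨R, hR⟩ := exists_isRamseyBound.{0} Prop 3 (s + 1 + 1 + 2 * 2 + 2 * r)
    refine ⟨R, 2 * M, by omega, fun t ht => ?_⟩
    obtain ⟨χ, hχ⟩ := hχ t ht
    rw [iterate_succ_apply', mul_assoc]
    exact ⟨_, (hχ.stepUp isSplitHeight_splitLevel (hrange _) (Prod.mk_right_injective true)
      hR).mono R.le_succ subset_rfl⟩

section Hypergraph

variable {ι : Type*} [DecidableEq ι] {k m n N q s : ℕ}

/-- The hypergraph of all `k`-sets of vertices meeting at most two of the fibres of `b`. -/
def twoFiberEdges (b : Fin n → ι) (k : ℕ) : Finset (Finset (Fin n)) :=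
  {e ∈ univ.powersetCard k | #(e.image b) ≤ 2}

theorem card_of_mem_twoFiberEdges {b : Fin n → ι} {e : Finset (Fin n)}
    (he : e ∈ twoFiberEdges b k) : #e = k :=
  (mem_powersetCard.mp (mem_filter.mp he).1).2

theorem card_filter_mem_twoFiberEdges_le [Fintype ι] {b : Fin n → ι}
    (hb : ∀ i, #{x | b x = i} ≤ s) (v : Fin n) :
    #{e ∈ twoFiberEdges b k | v ∈ e} ≤ Fintype.card ι * 4 ^ s := by
  let U (j : ι) : Finset (Fin n) := {x | b x = b v ∨ b x = j}
  have hcover : {e ∈ twoFiberEdges b k | v ∈ e} ⊆ univ.biUnion fun j => (U j).powerset := by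
    intro e he
    obtain ⟨he, hv⟩ := mem_filter.mp he
    have hone : #((e.image b).erase (b v)) ≤ 1 := by
      have := (mem_filter.mp he).2
      rw [card_erase_of_mem (mem_image_of_mem b hv)]
      omega
    have : Nonempty ι := ⟨b v⟩
    obtain ⟨j, hj⟩ := card_le_one_iff_subset_singleton.mp hone
    refine mem_biUnion.mpr ⟨j, mem_univ j, mem_powerset.mpr fun x hx => mem_filter.mpr ?_⟩
    refine ⟨mem_univ x, or_iff_not_imp_left.mpr fun hxv => ?_⟩
    exact mem_singleton.mp (hj (mem_erase.mpr ⟨hxv, mem_image_of_mem b hx⟩))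
  refine (card_le_card hcover).trans (card_biUnion_le_card_mul _ _ _ fun j _ => ?_)
  have hU : #(U j) ≤ 2 * s := by
    grw [show U j = _ from filter_or _ _ _, card_union_le, hb, hb, two_mul]
  calc #(U j).powerset = 2 ^ #(U j) := card_powerset _
    _ ≤ 2 ^ (2 * s) := Nat.pow_le_pow_right two_pos hU
    _ = 4 ^ s := pow_mul 2 2 s

theorem AvoidsBlocks.not_arrowsProp {χ : Finset ℕ → Fin q}
    (hχ : AvoidsBlocks χ k s m (range N)) {b : Fin n → ι} {g : Fin m → ι} (hg : Injective g)
    (hb : ∀ i, s ≤ #{x | b x = g i}) : ¬arrowsProp n N q (twoFiberEdges b k) := by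
  intro harrows
  obtain ⟨f, c, hf⟩ := harrows fun e => χ (e.map Fin.valEmbedding)
  let F : Fin n ↪ ℕ := f.trans Fin.valEmbedding
  refine hχ (fun i => ({x | b x = g i} : Finset (Fin n)).map F) (fun i y hy => ?_)
    (fun i => (hb i).trans_eq (card_map F).symm) (fun i j hij => ?_) c fun i j e he hek => ?_
  · obtain ⟨x, -, rfl⟩ := mem_map.mp hy
    exact mem_range.mpr (f x).isLt
  · refine (disjoint_map F).mpr (disjoint_filter.mpr fun x _ hi hj => ?_)
    exact hij (hg (hi.symm.trans hj))
  · rw [← map_union] at he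
    obtain ⟨u, hu, rfl⟩ := subset_map_iff.mp he
    have himage : u.image b ⊆ {g i, g j} := by
      intro y hy
      obtain ⟨x, hx, rfl⟩ := mem_image.mp hy
      simpa using hu hx
    have huE : u ∈ twoFiberEdges b k := mem_filter.mpr
      ⟨mem_powersetCard.mpr ⟨subset_univ u, by rw [← hek, card_map]⟩,
        (card_le_card himage).trans card_le_two⟩
    rw [← hf u huE, map_map]

theorem exists_arrowsProp (q : ℕ) {E : Finset (Finset (Fin n))} (hE : ∀ e ∈ E, #e = k) :
    ∃ N, arrowsProp n N q E := by
  obtain ⟨N, hN⟩ := exists_isRamseyBound.{0} (Fin q) k n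
  refine ⟨N, fun χ => ?_⟩
  obtain ⟨Y, -, hY, c, hc⟩ := hN χ univ (card_univ.trans (Fintype.card_fin N)).ge
  refine ⟨(Y.orderEmbOfCardLe hY).toEmbedding, c, fun e he => hc _ (fun y hy => ?_) ?_⟩
  · obtain ⟨x, -, rfl⟩ := mem_map.mp hy
    exact orderEmbOfCardLe_mem Y hY x
  · rw [card_map, hE e he]

theorem AvoidsBlocks.le_ramseyNumber {χ : Finset ℕ → Fin q}
    (hχ : AvoidsBlocks χ k s m (range N)) {b : Fin n → ι} {g : Fin m → ι} (hg : Injective g)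
    (hb : ∀ i, s ≤ #{x | b x = g i}) : N ≤ ramseyNumber n q (twoFiberEdges b k) := by
  refine le_csInf (exists_arrowsProp q fun e => card_of_mem_twoFiberEdges) fun N' hN' => ?_
  by_contra! hlt
  exact (hχ.mono le_rfl (range_subset_range.mpr hlt.le)).not_arrowsProp hg hb hN'

end Hypergraph

section Blocks

variable {n s : ℕ}

/-- The partition of `Fin n` into intervals of length `s`, given by the index of the interval. -/
def intervalIndex (s : ℕ) (x : Fin n) : Fin n :=
  ⟨x / s, (Nat.div_le_self x s).trans_lt x.isLt⟩

theorem map_filter_intervalIndex_eq (hs : 0 < s) (j : Fin n) :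
    ({x | intervalIndex s x = j} : Finset (Fin n)).map Fin.valEmbedding =
      {y ∈ Ico (j * s) (j * s + s) | y < n} := by
  ext y
  have hdiv : y / s = j ↔ j * s ≤ y ∧ y < j * s + s := by
    rw [Nat.div_eq_iff hs, Nat.lt_iff_le_pred (by omega)]
  simp only [mem_map, mem_filter, mem_univ, true_and, mem_Ico, ← hdiv]
  constructor
  · rintro ⟨x, rfl, rfl⟩
    exact ⟨rfl, x.isLt⟩
  · rintro ⟨hj, hy⟩
    exact ⟨⟨y, hy⟩, Fin.ext hj, rfl⟩

theorem card_filter_intervalIndex_le (hs : 0 < s) (j : Fin n) :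
    #{x | intervalIndex s x = j} ≤ s := by
  rw [← card_map Fin.valEmbedding, map_filter_intervalIndex_eq hs]
  exact (card_filter_le _ _).trans (by simp)

theorem le_card_filter_intervalIndex (hs : 0 < s) {j : Fin n} (hj : j * s + s ≤ n) :
    s ≤ #{x | intervalIndex s x = j} := by
  rw [← card_map Fin.valEmbedding, map_filter_intervalIndex_eq hs, filter_true_of_mem (by grind)]
  simp

theorem card_filter_mem_twoFiberEdges_intervalIndex_le (hs : 0 < s) (k : ℕ) (v : Fin n) :
    #{e ∈ twoFiberEdges (intervalIndex s) k | v ∈ e} ≤ 4 ^ s * n := by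
  simpa [mul_comm] using card_filter_mem_twoFiberEdges_le (card_filter_intervalIndex_le hs) v

theorem AvoidsBlocks.le_ramseyNumber_intervalIndex {k m N q : ℕ} {χ : Finset ℕ → Fin q}
    (hχ : AvoidsBlocks χ k s m (range N)) (hs : 0 < s) (hmn : m * s ≤ n) :
    N ≤ ramseyNumber n q (twoFiberEdges (intervalIndex s : Fin n → Fin n) k) := by
  have hm : m ≤ n := (Nat.le_mul_of_pos_right m hs).trans hmn
  refine hχ.le_ramseyNumber (Fin.castLE_injective hm) fun i => le_card_filter_intervalIndex hs ?_
  calc (i : ℕ) * s + s = (i + 1) * s := (Nat.succ_mul i s).symm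
    _ ≤ m * s := Nat.mul_le_mul_right s i.isLt
    _ ≤ n := hmn

end Blocks

theorem twR_natCast (k t : ℕ) : twR (k + 1) t = ((fun x : ℕ => 2 ^ x)^[k] t : ℕ) := by
  induction k with
  | zero => rfl
  | succ k ih => rw [twR, ih, iterate_succ_apply', Nat.cast_pow, Nat.cast_two, Real.rpow_natCast]

theorem monotone_twR : ∀ k, Monotone (twR k)
  | 0 => monotone_id
  | 1 => monotone_id
  | k + 2 => fun _ _ hxy => Real.rpow_le_rpow_of_exponent_le one_le_two (monotone_twR (k + 1) hxy)

theorem div_le_cast_div {c d n : ℕ} (hd : 0 < d) (hdn : d ≤ n) (hdc : 2 * d ≤ c) :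
    (n : ℝ) / c ≤ (n / d : ℕ) := by
  have hlt : n < 2 * d * (n / d) := by
    have := Nat.lt_mul_div_succ n hd
    have := Nat.div_pos hdn hd
    nlinarith
  have hle : n ≤ n / d * c := hlt.le.trans (by grw [hdc, mul_comm])
  rw [div_le_iff₀ (by norm_cast; omega)]
  exact_mod_cast hle

/-- For any `k ≥ 2`, there is a constant `C_k` such that for any `n ≥ C_k`, there exists a
`k`-uniform `n`-vertex hypergraph with maximum degree at most `C_k·n` whose `4`-color
Ramsey number is at least `tw_k(n/C_k)`. -/
theorem stmt_1 (k : ℕ) (hk : 2 ≤ k) :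
    ∃ C : ℝ, 0 < C ∧ ∀ n : ℕ, C ≤ (n : ℝ) →
      ∃ E : Finset (Finset (Fin n)),
        (∀ e ∈ E, e.card = k) ∧
        (∀ v : Fin n, ((E.filter fun e => v ∈ e).card : ℝ) ≤ C * (n : ℝ)) ∧
        twR k ((n : ℝ) / C) ≤ (ramseyNumber n 4 E : ℝ) := by
  obtain ⟨k, rfl⟩ := Nat.exists_eq_add_of_le' hk
  obtain ⟨s, M, hM, havoid⟩ := exists_avoidsBlocks k
  set d := M * (s + 1)
  have hd : 0 < d := by positivity
  let C := max (2 * d) (4 ^ (s + 1))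
  have hdC : 2 * d ≤ C := le_max_left _ _
  refine ⟨C, by norm_cast; omega, fun n hn => ?_⟩
  have hdn : d ≤ n := by
    have : C ≤ n := mod_cast hn
    omega
  obtain ⟨χ, hχ⟩ := havoid (n / d) (Nat.div_pos hdn hd)
  refine ⟨twoFiberEdges (intervalIndex (s + 1)) (k + 2), fun e => card_of_mem_twoFiberEdges,
    fun v => ?_, ?_⟩
  · have hdeg := card_filter_mem_twoFiberEdges_intervalIndex_le s.succ_pos (k + 2) v
    exact_mod_cast hdeg.trans (Nat.mul_le_mul_right n (le_max_right _ _))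
  · have hblocks : M * (n / d) * (s + 1) ≤ n :=
      (mul_right_comm M (n / d) (s + 1)).trans_le (Nat.mul_div_le n d)
    let toFin : Bool × Prop ≃ Fin 4 := Fintype.equivFinOfCardEq (by simp)
    grw [monotone_twR (k + 2) (div_le_cast_div hd hdn hdC), twR_natCast]
    exact_mod_cast (hχ.comp_injective toFin.injective).le_ramseyNumber_intervalIndex
      s.succ_pos hblocks
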